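/- Let S and A be finite nonempty types, let P° : S → A → (probability vector on S) be a nominal transition kernel, R ∈ (0,1), π : S → (probability vector on A) a policy, r : S → A → ℝ and g ∈ ℝ. Define the robust Bellman operator for the R-contamination uncertainty set by (T V) s = ∑_a π s a · ( r s a − g + (1−R)·∑_{s'} P° s a s' · V s' + R·(max_x V x) ) for V : S → ℝ. Then for all V, W : S → ℝ: sp(T V − T W) ≤ (1−R)·sp(V − W), where sp(U) = (max_s U s) − (min_s U s) is the span semi-norm. In particular the robust Bellman operator is a (1−R)-contraction in the span semi-norm. (The contraction property of the robust average-cost Bellman operator under the semi-norm, specialized to the contamination uncertainty set.) -/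

import Mathlib

/-!
The worst-case term `R * max V` does not depend on the state, and the rewards cancel in a difference, so
`(T V - T W) s = c + (1 - R) * E_s (V - W)` with a constant `c` and a probability average `E_s` over
next states. Averages of `V - W` lie between its minimum and its maximum, so the values of
`T V - T W` lie in an interval of length `(1 - R) * sp (V - W)`.
-/

/-- The span semi-norm of a function `U : S → ℝ` on a finite nonempty type:
`sp(U) = (max_s U s) − (min_s U s)`. -/
noncomputable def spanSeminorm {S : Type*} [Fintype S] [Nonempty S] (U : S → ℝ) : ℝ :=
  Finset.univ.sup' Finset.univ_nonempty U - Finset.univ.inf' Finset.univ_nonempty U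

lemma weighted_sum_mem_Icc {ι : Type*} [Fintype ι] (q f : ι → ℝ) (hq : ∀ i, 0 ≤ q i)
    (hq1 : ∑ i, q i = 1) {m M : ℝ} (hf : ∀ i, f i ∈ Set.Icc m M) :
    ∑ i, q i * f i ∈ Set.Icc m M := by
  simpa using (convex_Icc m M).sum_mem (t := Finset.univ) (fun i _ => hq i) hq1 (fun i _ => hf i)

lemma spanSeminorm_le_of_mem_Icc {S : Type*} [Fintype S] [Nonempty S] {U : S → ℝ} {a b : ℝ}
    (h : ∀ s, U s ∈ Set.Icc a b) : spanSeminorm U ≤ b - a :=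
  sub_le_sub (Finset.sup'_le _ _ fun s _ => (h s).2) (Finset.le_inf' _ _ fun s _ => (h s).1)

/-- The robust average-cost Bellman operator for the
`R`-contamination uncertainty set,
`(T V) s = ∑_a π s a · ( r s a − g + (1−R)·∑_{s'} P° s a s' · V s' + R·max_x V x )`,
is a `(1−R)`-contraction in the span semi-norm:
`sp(T V − T W) ≤ (1−R)·sp(V − W)`. -/
theorem robust_bellman_span_contraction
    {S A : Type*} [Fintype S] [Nonempty S] [Fintype A] [Nonempty A]
    (Pnom : S → A → S → ℝ)
    (hPnom : ∀ s a, (∀ s', 0 ≤ Pnom s a s') ∧ ∑ s', Pnom s a s' = 1)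
    (R : ℝ) (hR0 : 0 < R) (hR1 : R < 1)
    (π : S → A → ℝ) (hπ : ∀ s, (∀ a, 0 ≤ π s a) ∧ ∑ a, π s a = 1)
    (r : S → A → ℝ) (g : ℝ)
    (T : (S → ℝ) → (S → ℝ))
    (hT : ∀ (V : S → ℝ) (s : S), T V s = ∑ a, π s a *
      (r s a - g + (1 - R) * (∑ s', Pnom s a s' * V s')
        + R * (Finset.univ.sup' Finset.univ_nonempty V))) :
    ∀ V W : S → ℝ, spanSeminorm (T V - T W) ≤ (1 - R) * spanSeminorm (V - W) := by
  intro V W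
  set M := Finset.univ.sup' Finset.univ_nonempty (V - W) with hM
  set m := Finset.univ.inf' Finset.univ_nonempty (V - W) with hm
  set c := R * (Finset.univ.sup' Finset.univ_nonempty V
    - Finset.univ.sup' Finset.univ_nonempty W) with hc
  have hVW : ∀ s, (V - W) s ∈ Set.Icc m M := fun s =>
    ⟨Finset.inf'_le _ (Finset.mem_univ s), Finset.le_sup' _ (Finset.mem_univ s)⟩
  have key : ∀ s, (T V - T W) s
      = c + (1 - R) * ∑ a, π s a * ∑ s', Pnom s a s' * (V - W) s' := by
    intro s
    have hc1 : c = ∑ a, π s a * c := by rw [← Finset.sum_mul, (hπ s).2, one_mul]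
    rw [Pi.sub_apply, hT, hT, hc1, Finset.mul_sum, ← Finset.sum_sub_distrib,
      ← Finset.sum_add_distrib]
    refine Finset.sum_congr rfl fun a _ => ?_
    simp only [Pi.sub_apply, mul_sub, Finset.sum_sub_distrib, hc]
    ring
  have hbound : ∀ s, (T V - T W) s ∈ Set.Icc (c + (1 - R) * m) (c + (1 - R) * M) := by
    intro s
    have h := weighted_sum_mem_Icc (π s) _ (hπ s).1 (hπ s).2 fun a =>
      weighted_sum_mem_Icc (Pnom s a) _ (hPnom s a).1 (hPnom s a).2 hVW
    have hR : 0 ≤ 1 - R := by linarith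
    rw [key s]
    exact ⟨by gcongr; exact h.1, by gcongr; exact h.2⟩
  calc spanSeminorm (T V - T W) ≤ (c + (1 - R) * M) - (c + (1 - R) * m) :=
        spanSeminorm_le_of_mem_Icc hbound
    _ = (1 - R) * spanSeminorm (V - W) := by
        rw [spanSeminorm, ← hM, ← hm]
        ring
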